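/- arXiv:2304.03242 — 3 statements merged into one kernel-verified Lean document; each statement's English description precedes it below -/
import Mathlib

section
/- Let K_I, K_D > 0, δ := K_D/K_I, and let L = (L_x, L_y) ∈ ℝ² with L ≠ 0. Then the isoneutral mixing tensor factorizes as K_iso(L) = R(L) · D · R(L)ᵀ, where D = diag(K_I, K_I, K_D) and R(L) is the rotation matrix associated with L. -/
/-!
The identity is checked entrywise. Writing `n = |L|` and `s = √(1 + |L|²)`, both positive because
`L ≠ 0`, each entry of `R(L) · diag(K_I, K_I, K_D) · R(L)ᵀ` becomes, after clearing denominators,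
a polynomial in which the roots occur only through `n² = |L|²` and `s² = 1 + |L|²`.
-/

open Matrix

/-- The isoneutral mixing tensor `K_iso(L)` of the Gent–McWilliams–Redi parametrization,
for slope `L = (Lx, Ly)`, isoneutral diffusivity `K_I` and dianeutral diffusivity `K_D`,
with `δ = K_D/K_I`. -/
noncomputable def Kiso (KI KD Lx Ly : ℝ) : Matrix (Fin 3) (Fin 3) ℝ :=
  let δ : ℝ := KD / KI
  (KI / (1 + (Lx ^ 2 + Ly ^ 2))) •
    !![1 + δ * Lx ^ 2 + Ly ^ 2, (δ - 1) * Lx * Ly,       (1 - δ) * Lx;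
       (δ - 1) * Lx * Ly,       1 + Lx ^ 2 + δ * Ly ^ 2, (1 - δ) * Ly;
       (1 - δ) * Lx,            (1 - δ) * Ly,            δ + (Lx ^ 2 + Ly ^ 2)]

/-- The rotation matrix `R(L)` associated with a density slope vector `L = (Lx, Ly)`. -/
noncomputable def rotMat (Lx Ly : ℝ) : Matrix (Fin 3) (Fin 3) ℝ :=
  let n : ℝ := Real.sqrt (Lx ^ 2 + Ly ^ 2)
  let s : ℝ := Real.sqrt (1 + (Lx ^ 2 + Ly ^ 2))
  !![Ly / n,  Lx / (n * s), -Lx / s;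
     -Lx / n, Ly / (n * s), -Ly / s;
     0,       n / s,         1 / s]

/-- Factorization of the isoneutral mixing tensor:
`K_iso(L) = R(L) · diag(K_I, K_I, K_D) · R(L)ᵀ` for `L ≠ 0`. -/
theorem Kiso_factorization (KI KD Lx Ly : ℝ) (hKI : 0 < KI) (hKD : 0 < KD)
    (hL : (Lx, Ly) ≠ (0, 0)) :
    Kiso KI KD Lx Ly =
      rotMat Lx Ly * Matrix.diagonal ![KI, KI, KD] * (rotMat Lx Ly)ᵀ := by
  have ha : 0 < Lx ^ 2 + Ly ^ 2 := by
    by_contra h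
    apply hL
    have hx : Lx = 0 := by nlinarith [sq_nonneg Lx, sq_nonneg Ly]
    have hy : Ly = 0 := by nlinarith [sq_nonneg Lx, sq_nonneg Ly]
    rw [hx, hy]
  have hn := Real.sqrt_pos.2 ha
  have hn2 := Real.sq_sqrt ha.le
  have hs := Real.sqrt_pos.2 (add_pos one_pos ha)
  have hs2 := Real.sq_sqrt (add_pos one_pos ha).le
  have hp := add_pos one_pos ha
  unfold Kiso rotMat
  -- Only the positivity and the squares of the two roots matter from here on.
  generalize Real.sqrt (Lx ^ 2 + Ly ^ 2) = n at hn hn2 ⊢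
  generalize Real.sqrt (1 + (Lx ^ 2 + Ly ^ 2)) = s at hs hs2 ⊢
  ext i j
  fin_cases i <;> fin_cases j <;>
    simp [Matrix.mul_apply, Fin.sum_univ_three, Matrix.vecMul_diagonal] <;>
    field_simp <;> (try simp only [hn2, hs2]) <;> ring
end

section
/- Let K_I, K_D > 0, δ := K_D/K_I, and set μ := min{K_I, K_D} and M := max{K_I, K_D}. Then for every L = (L_x, L_y) ∈ ℝ², the isoneutral mixing tensor K_iso(L) is a symmetric matrix and its quadratic form satisfies the two-sided ellipticity bounds μ|ξ|² ≤ ξ · (K_iso(L) ξ) ≤ M|ξ|² for all ξ ∈ ℝ³. -/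
/-! With `n = (-Lx, -Ly, 1)` the dianeutral direction, `K_iso(L)` acts as `K_D` on the line
spanned by `n` and as `K_I` on its orthogonal complement. Hence its quadratic form is
`K_I (|ξ|² - p) + K_D p`, where `p = (n·ξ)²/|n|²` is the squared length of the projection of `ξ`
onto `n` (`Kiso_quadratic_form`). Cauchy–Schwarz gives `0 ≤ p ≤ |ξ|²`, so the form lies between
`min(K_I, K_D) |ξ|²` and `max(K_I, K_D) |ξ|²`. -/

open Matrix

/-- The squared length of the orthogonal projection of `ξ` onto the dianeutral direction
`(-Lx, -Ly, 1)`. -/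
noncomputable def dianeutralSq (Lx Ly : ℝ) (ξ : Fin 3 → ℝ) : ℝ :=
  (ξ 2 - Lx * ξ 0 - Ly * ξ 1) ^ 2 / (1 + (Lx ^ 2 + Ly ^ 2))

lemma dianeutralSq_nonneg (Lx Ly : ℝ) (ξ : Fin 3 → ℝ) : 0 ≤ dianeutralSq Lx Ly ξ := by
  unfold dianeutralSq
  positivity

lemma dianeutralSq_le (Lx Ly : ℝ) (ξ : Fin 3 → ℝ) : dianeutralSq Lx Ly ξ ≤ ξ ⬝ᵥ ξ := by
  unfold dianeutralSq
  rw [div_le_iff₀ (by positivity)]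
  simp only [dotProduct, Fin.sum_univ_three]
  -- Lagrange's identity: the defect in Cauchy–Schwarz is the squared norm of `n × ξ`.
  nlinarith [sq_nonneg (ξ 0 + Lx * ξ 2), sq_nonneg (ξ 1 + Ly * ξ 2),
    sq_nonneg (Lx * ξ 1 - Ly * ξ 0)]

lemma Kiso_quadratic_form (KI KD Lx Ly : ℝ) (hKI : 0 < KI) (ξ : Fin 3 → ℝ) :
    ξ ⬝ᵥ (Kiso KI KD Lx Ly).mulVec ξ =
      KI * (ξ ⬝ᵥ ξ - dianeutralSq Lx Ly ξ) + KD * dianeutralSq Lx Ly ξ := by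
  have hn : 1 + (Lx ^ 2 + Ly ^ 2) ≠ 0 := by positivity
  simp [Kiso, dianeutralSq, dotProduct, mulVec, Fin.sum_univ_three]
  field_simp
  ring

/-- Symmetry and two-sided ellipticity bounds for the isoneutral mixing tensor:
`μ|ξ|² ≤ ξ·(K_iso(L)ξ) ≤ M|ξ|²` with `μ = min(K_I,K_D)` and `M = max(K_I,K_D)`. -/
theorem Kiso_elliptic (KI KD Lx Ly : ℝ) (hKI : 0 < KI) (hKD : 0 < KD) :
    (Kiso KI KD Lx Ly).IsSymm ∧
    ∀ ξ : Fin 3 → ℝ,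
      min KI KD * (ξ ⬝ᵥ ξ) ≤ ξ ⬝ᵥ (Kiso KI KD Lx Ly).mulVec ξ ∧
      ξ ⬝ᵥ (Kiso KI KD Lx Ly).mulVec ξ ≤ max KI KD * (ξ ⬝ᵥ ξ) := by
  constructor
  · ext i j
    fin_cases i <;> fin_cases j <;> simp [Kiso]
  · intro ξ
    have h0 := dianeutralSq_nonneg Lx Ly ξ
    have h1 := sub_nonneg.2 (dianeutralSq_le Lx Ly ξ)
    rw [Kiso_quadratic_form KI KD Lx Ly hKI]
    constructor
    · linarith [mul_le_mul_of_nonneg_right (min_le_left KI KD) h1,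
        mul_le_mul_of_nonneg_right (min_le_right KI KD) h0]
    · linarith [mul_le_mul_of_nonneg_right (le_max_left KI KD) h1,
        mul_le_mul_of_nonneg_right (le_max_right KI KD) h0]
end

section
/- Let K_I, K_D > 0 and δ := K_D/K_I. There exists a constant c ≥ 0, depending only on K_I and K_D, such that for all L₁, L₂ ∈ ℝ², every entry of the matrix difference satisfies |(K_iso(L₁))_{ij} − (K_iso(L₂))_{ij}| ≤ c |L₁ − L₂| for 1 ≤ i, j ≤ 3; i.e., the map L ↦ K_iso(L) is globally Lipschitz continuous on ℝ². -/
/-!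
With `n = (-Lx, -Ly, 1) / √(1 + |L|²)` the tensor is `K_I Id + (K_D - K_I) n nᵀ`
(`Kiso_eq_unitNormal`), so only the products `nᵢ nⱼ` vary with the slope. The vectors
`(-Lx, -Ly, 1)` have norm at least one, where radial projection to the unit sphere is
1-Lipschitz (`unitNormal_sub_sq_sum_le`); as the coordinates of `n` are bounded by one, each
product is 2-Lipschitz, which gives the constant `c = 2 |K_D - K_I|`.
-/

open Matrix

/-- The unit normal `(-Lx, -Ly, 1) / √(1 + |L|²)` to the isoneutral plane of slope `L = (x, y)`. -/
noncomputable def unitNormal (x y : ℝ) : Fin 3 → ℝ :=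
  ![-x / √(1 + (x ^ 2 + y ^ 2)), -y / √(1 + (x ^ 2 + y ^ 2)), 1 / √(1 + (x ^ 2 + y ^ 2))]

/-- The tensor is an isotropic part plus a rank-one part: `K_iso = K_I Id + (K_D - K_I) n nᵀ`. -/
lemma Kiso_eq_unitNormal (KI KD x y : ℝ) (hKI : 0 < KI) (i j : Fin 3) :
    Kiso KI KD x y i j =
      KI * (1 : Matrix (Fin 3) (Fin 3) ℝ) i j
        + (KD - KI) * (unitNormal x y i * unitNormal x y j) := by
  have hD : 0 < 1 + (x ^ 2 + y ^ 2) := by positivity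
  have hs : √(1 + (x ^ 2 + y ^ 2)) ^ 2 = 1 + (x ^ 2 + y ^ 2) := Real.sq_sqrt hD.le
  have hs0 : √(1 + (x ^ 2 + y ^ 2)) ≠ 0 := (Real.sqrt_pos.mpr hD).ne'
  have key : ∀ a b : ℝ, a / √(1 + (x ^ 2 + y ^ 2)) * (b / √(1 + (x ^ 2 + y ^ 2)))
      = a * b / (1 + (x ^ 2 + y ^ 2)) := by
    intro a b
    rw [div_mul_div_comm, ← sq, hs]
  fin_cases i <;> fin_cases j <;> simp [-one_div, Kiso, unitNormal, key] <;>
    field_simp <;> ring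

lemma unitNormal_sq_sum (x y : ℝ) :
    unitNormal x y 0 ^ 2 + unitNormal x y 1 ^ 2 + unitNormal x y 2 ^ 2 = 1 := by
  have hD : 0 < 1 + (x ^ 2 + y ^ 2) := by positivity
  simp only [unitNormal, Matrix.cons_val, div_pow, Real.sq_sqrt hD.le]
  field_simp
  ring

lemma abs_unitNormal_le_one (x y : ℝ) (i : Fin 3) : |unitNormal x y i| ≤ 1 := by
  have h := unitNormal_sq_sum x y
  rw [← sq_le_one_iff_abs_le_one]
  fin_cases i <;> simp only [Fin.zero_eta, Fin.mk_one, Fin.reduceFinMk] <;>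
    nlinarith [sq_nonneg (unitNormal x y 0), sq_nonneg (unitNormal x y 1),
      sq_nonneg (unitNormal x y 2)]

/-- Radial projection to the unit sphere does not increase distances between vectors of norm at
least one: for `v = s n`, `w = t m` with `n`, `m` unit,
`|v - w|² = (s - t)² + s t |n - m|² ≥ |n - m|²`. -/
lemma unitNormal_sub_sq_sum_le (x y z w : ℝ) :
    (unitNormal x y 0 - unitNormal z w 0) ^ 2 + (unitNormal x y 1 - unitNormal z w 1) ^ 2
      + (unitNormal x y 2 - unitNormal z w 2) ^ 2 ≤ (x - z) ^ 2 + (y - w) ^ 2 := by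
  have hn := unitNormal_sq_sum x y
  have hm := unitNormal_sq_sum z w
  have hs1 : 1 ≤ √(1 + (x ^ 2 + y ^ 2)) := Real.one_le_sqrt.mpr (by nlinarith)
  have ht1 : 1 ≤ √(1 + (z ^ 2 + w ^ 2)) := Real.one_le_sqrt.mpr (by nlinarith)
  have hx : x = -(√(1 + (x ^ 2 + y ^ 2)) * unitNormal x y 0) := by
    simp only [unitNormal, Matrix.cons_val]; field_simp
  have hy : y = -(√(1 + (x ^ 2 + y ^ 2)) * unitNormal x y 1) := by
    simp only [unitNormal, Matrix.cons_val]; field_simp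
  have h1 : √(1 + (x ^ 2 + y ^ 2)) * unitNormal x y 2 = 1 := by
    simp only [unitNormal, Matrix.cons_val]; field_simp
  have hz : z = -(√(1 + (z ^ 2 + w ^ 2)) * unitNormal z w 0) := by
    simp only [unitNormal, Matrix.cons_val]; field_simp
  have hw : w = -(√(1 + (z ^ 2 + w ^ 2)) * unitNormal z w 1) := by
    simp only [unitNormal, Matrix.cons_val]; field_simp
  have h2 : √(1 + (z ^ 2 + w ^ 2)) * unitNormal z w 2 = 1 := by
    simp only [unitNormal, Matrix.cons_val]; field_simp
  generalize √(1 + (x ^ 2 + y ^ 2)) = s at *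
  generalize √(1 + (z ^ 2 + w ^ 2)) = t at *
  generalize unitNormal x y 0 = n0 at *
  generalize unitNormal x y 1 = n1 at *
  generalize unitNormal x y 2 = n2 at *
  generalize unitNormal z w 0 = m0 at *
  generalize unitNormal z w 1 = m1 at *
  generalize unitNormal z w 2 = m2 at *
  have hst : 1 ≤ s * t := one_le_mul_of_one_le_of_one_le hs1 ht1
  have h3 : (s * n2 - t * m2) ^ 2 = 0 := by rw [h1, h2]; ring
  have hid : (x - z) ^ 2 + (y - w) ^ 2
      = (s - t) ^ 2 + s * t * ((n0 - m0) ^ 2 + (n1 - m1) ^ 2 + (n2 - m2) ^ 2) := by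
    rw [hx, hy, hz, hw]
    linear_combination (s ^ 2 - s * t) * hn + (t ^ 2 - s * t) * hm - h3
  have hnonneg : 0 ≤ (n0 - m0) ^ 2 + (n1 - m1) ^ 2 + (n2 - m2) ^ 2 := by positivity
  rw [hid]
  nlinarith [sq_nonneg (s - t), mul_le_mul_of_nonneg_right hst hnonneg]

lemma abs_unitNormal_sub_le (x y z w : ℝ) (i : Fin 3) :
    |unitNormal x y i - unitNormal z w i| ≤ √((x - z) ^ 2 + (y - w) ^ 2) := by
  have h := unitNormal_sub_sq_sum_le x y z w
  apply Real.abs_le_sqrt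
  fin_cases i <;> simp only [Fin.zero_eta, Fin.mk_one, Fin.reduceFinMk] <;>
    nlinarith [sq_nonneg (unitNormal x y 0 - unitNormal z w 0),
      sq_nonneg (unitNormal x y 1 - unitNormal z w 1),
      sq_nonneg (unitNormal x y 2 - unitNormal z w 2)]

/-- Global Lipschitz continuity of the entries of the isoneutral mixing tensor as a function of
the density slope `L ∈ ℝ²`:
`|(K_iso(L₁))_{ij} − (K_iso(L₂))_{ij}| ≤ c |L₁ − L₂|` with `c` depending only on `K_I, K_D`. -/
theorem Kiso_entries_lipschitz (KI KD : ℝ) (hKI : 0 < KI) (hKD : 0 < KD) :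
    ∃ c : ℝ, 0 ≤ c ∧ ∀ Lx₁ Ly₁ Lx₂ Ly₂ : ℝ, ∀ i j : Fin 3,
      |Kiso KI KD Lx₁ Ly₁ i j - Kiso KI KD Lx₂ Ly₂ i j| ≤
        c * Real.sqrt ((Lx₁ - Lx₂) ^ 2 + (Ly₁ - Ly₂) ^ 2) := by
  refine ⟨2 * |KD - KI|, by positivity, fun x y z w i j => ?_⟩
  rw [Kiso_eq_unitNormal KI KD x y hKI, Kiso_eq_unitNormal KI KD z w hKI,
    add_sub_add_left_eq_sub, ← mul_sub, abs_mul]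
  have hprod : |unitNormal x y i * unitNormal x y j - unitNormal z w i * unitNormal z w j|
      ≤ 2 * √((x - z) ^ 2 + (y - w) ^ 2) := by
    calc _ = |unitNormal x y i * (unitNormal x y j - unitNormal z w j)
            + (unitNormal x y i - unitNormal z w i) * unitNormal z w j| := by ring_nf
      _ ≤ |unitNormal x y i| * |unitNormal x y j - unitNormal z w j|
            + |unitNormal x y i - unitNormal z w i| * |unitNormal z w j| := by
          rw [← abs_mul, ← abs_mul]; exact abs_add_le _ _
      _ ≤ 1 * √((x - z) ^ 2 + (y - w) ^ 2) + √((x - z) ^ 2 + (y - w) ^ 2) * 1 := by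
          gcongr
          · exact abs_unitNormal_le_one x y i
          · exact abs_unitNormal_sub_le x y z w j
          · exact abs_unitNormal_sub_le x y z w i
          · exact abs_unitNormal_le_one z w j
      _ = _ := by ring
  calc _ ≤ |KD - KI| * (2 * √((x - z) ^ 2 + (y - w) ^ 2)) := by gcongr
    _ = _ := by ring
end
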